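/- Let (Ω, ℱ, μ) be a probability space, E and F measurable spaces, and let C : Ω → E, S : Ω → ℝ, W : Ω → ℝ, U : Ω → ℝ be measurable with W(ω) ∈ {0,1} for every ω and U integrable. Let ψ : E → F be measurable and set Z := ψ ∘ C. Let g̃ : ℝ × F → ℝ be measurable such that ω ↦ g̃(1, Z(ω)) and ω ↦ g̃(0, Z(ω)) are integrable, define Y(ω) = g̃(W(ω), Z(ω)) + U(ω), and suppose there is a measurable k : F → ℝ with μ[U | σ(C)] = k ∘ Z almost everywhere and that μ[U | σ(S,C)] = μ[U | σ(C)] almost everywhere. Define f̃₁(z) := g̃(1, z) + k(z) and f̃₀(z) := g̃(0, z) + k(z). Then, almost everywhere, μ[Y | σ(S,C)] = (f̃₁ ∘ Z) · μ[W | σ(S,C)] + (f̃₀ ∘ Z) · (1 − μ[W | σ(S,C)]). -/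

import Mathlib

open MeasureTheory

/-!
A function evaluated at a binary variable is affine in it: `g W = W • g 1 + (1 - W) • g 0`. If
`g 1` and `g 0` are known given `m`, they can be pulled out of the conditional expectation, so only
`μ[W | m]` remains. The confounding shift `μ[U | m]` does not depend on the treatment, hence it can
be absorbed into both arms, because the weights `μ[W | m]` and `1 - μ[W | m]` add up to one.
-/

section BinaryVariable

variable {Ω G : Type*} [NormedAddCommGroup G] [NormedSpace ℝ G]

lemma apply_eq_smul_add_one_sub_smul (g : ℝ → G) {w : ℝ} (hw : w = 0 ∨ w = 1) :
    g w = w • g 1 + (1 - w) • g 0 := by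
  rcases hw with rfl | rfl <;> simp

variable {m m₀ : MeasurableSpace Ω} {μ : Measure Ω} {W : Ω → ℝ} {g : ℝ → Ω → G}

lemma ae_norm_le_one_of_binary (hWbin : ∀ᵐ ω ∂μ, W ω = 0 ∨ W ω = 1) :
    ∀ᵐ ω ∂μ, ‖W ω‖ ≤ 1 := by
  filter_upwards [hWbin] with ω hω
  rcases hω with h | h <;> simp [h]

lemma one_sub_binary (hWbin : ∀ᵐ ω ∂μ, W ω = 0 ∨ W ω = 1) :
    ∀ᵐ ω ∂μ, (1 - W) ω = 0 ∨ (1 - W) ω = 1 := by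
  filter_upwards [hWbin] with ω hω
  rcases hω with h | h <;> simp [h]

lemma integrable_smul_of_binary {f : Ω → G} (hW : AEStronglyMeasurable W μ)
    (hWbin : ∀ᵐ ω ∂μ, W ω = 0 ∨ W ω = 1) (hf : Integrable f μ) : Integrable (W • f) μ :=
  hf.bdd_smul 1 hW (ae_norm_le_one_of_binary hWbin)

lemma integrable_one_sub_smul_of_binary {f : Ω → G} (hW : AEStronglyMeasurable W μ)
    (hWbin : ∀ᵐ ω ∂μ, W ω = 0 ∨ W ω = 1) (hf : Integrable f μ) :
    Integrable ((1 - W) • f) μ :=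
  integrable_smul_of_binary (aestronglyMeasurable_one.sub hW) (one_sub_binary hWbin) hf

lemma apply_binary_ae_eq (g : ℝ → Ω → G) (hWbin : ∀ᵐ ω ∂μ, W ω = 0 ∨ W ω = 1) :
    (fun ω ↦ g (W ω) ω) =ᵐ[μ] W • g 1 + (1 - W) • g 0 := by
  filter_upwards [hWbin] with ω hω
  exact apply_eq_smul_add_one_sub_smul (g · ω) hω

lemma integrable_apply_binary (hW : AEStronglyMeasurable W μ)
    (hWbin : ∀ᵐ ω ∂μ, W ω = 0 ∨ W ω = 1) (hg₁ : Integrable (g 1) μ) (hg₀ : Integrable (g 0) μ) :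
    Integrable (fun ω ↦ g (W ω) ω) μ :=
  ((integrable_smul_of_binary hW hWbin hg₁).add
    (integrable_one_sub_smul_of_binary hW hWbin hg₀)).congr (apply_binary_ae_eq g hWbin).symm

lemma integrable_smul_apply_one_of_binary (hW : AEStronglyMeasurable W μ)
    (hWbin : ∀ᵐ ω ∂μ, W ω = 0 ∨ W ω = 1) (hg : Integrable (fun ω ↦ g (W ω) ω) μ) :
    Integrable (W • g 1) μ := by
  refine (integrable_smul_of_binary hW hWbin hg).congr ?_
  filter_upwards [hWbin] with ω hω
  rcases hω with h | h <;> simp [h]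

lemma integrable_one_sub_smul_apply_zero_of_binary (hW : AEStronglyMeasurable W μ)
    (hWbin : ∀ᵐ ω ∂μ, W ω = 0 ∨ W ω = 1) (hg : Integrable (fun ω ↦ g (W ω) ω) μ) :
    Integrable ((1 - W) • g 0) μ := by
  refine (integrable_one_sub_smul_of_binary hW hWbin hg).congr ?_
  filter_upwards [hWbin] with ω hω
  rcases hω with h | h <;> simp [h]

variable [CompleteSpace G] [IsFiniteMeasure μ]

lemma condExp_smul_add_one_sub_smul (hm : m ≤ m₀) {a b : Ω → G} (hW : Integrable W μ)
    (ha : AEStronglyMeasurable[m] a μ) (hb : AEStronglyMeasurable[m] b μ)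
    (hWa : Integrable (W • a) μ) (hWb : Integrable ((1 - W) • b) μ) :
    μ[W • a + (1 - W) • b | m] =ᵐ[μ] μ[W | m] • a + (1 - μ[W | m]) • b := by
  have h_one : Integrable (1 : Ω → ℝ) μ := integrable_const 1
  have h_compl : μ[1 - W | m] =ᵐ[μ] 1 - μ[W | m] := by
    simpa only [show μ[(1 : Ω → ℝ) | m] = 1 from condExp_const hm 1] using condExp_sub h_one hW m
  calc μ[W • a + (1 - W) • b | m]
      =ᵐ[μ] μ[W • a | m] + μ[(1 - W) • b | m] := condExp_add hWa hWb m
    _ =ᵐ[μ] μ[W | m] • a + μ[1 - W | m] • b :=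
      (condExp_smul_of_aestronglyMeasurable_right hW hWa ha).add
        (condExp_smul_of_aestronglyMeasurable_right (h_one.sub hW) hWb hb)
    _ =ᵐ[μ] μ[W | m] • a + (1 - μ[W | m]) • b := .add .rfl (h_compl.smul .rfl)

lemma condExp_apply_binary (hm : m ≤ m₀) (hW : AEStronglyMeasurable W μ)
    (hWbin : ∀ᵐ ω ∂μ, W ω = 0 ∨ W ω = 1) (hg₁ : AEStronglyMeasurable[m] (g 1) μ)
    (hg₀ : AEStronglyMeasurable[m] (g 0) μ) (hg : Integrable (fun ω ↦ g (W ω) ω) μ) :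
    μ[fun ω ↦ g (W ω) ω | m] =ᵐ[μ] μ[W | m] • g 1 + (1 - μ[W | m]) • g 0 := by
  have hW_int : Integrable W μ := .of_bound hW 1 (ae_norm_le_one_of_binary hWbin)
  exact (condExp_congr_ae (apply_binary_ae_eq g hWbin)).trans
    (condExp_smul_add_one_sub_smul hm hW_int hg₁ hg₀
      (integrable_smul_apply_one_of_binary hW hWbin hg)
      (integrable_one_sub_smul_apply_zero_of_binary hW hWbin hg))

end BinaryVariable

theorem civ_representation_counterfactual_identity_general
    {Ω F G : Type*} [MeasurableSpace F] [NormedAddCommGroup G] [NormedSpace ℝ G] [CompleteSpace G]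
    {m m₀ : MeasurableSpace Ω} {μ : Measure Ω} [IsFiniteMeasure μ] (hm : m ≤ m₀)
    {W : Ω → ℝ} {U Y : Ω → G} {Z : Ω → F} {gt : ℝ × F → G} {k : F → G}
    (hW : AEStronglyMeasurable W μ) (hWbin : ∀ᵐ ω ∂μ, W ω = 0 ∨ W ω = 1)
    (hU : Integrable U μ) (hZ : Measurable[m] Z)
    (hgt₁ : StronglyMeasurable fun z ↦ gt (1, z)) (hgt₀ : StronglyMeasurable fun z ↦ gt (0, z))
    (hgt : Integrable (fun ω ↦ gt (W ω, Z ω)) μ)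
    (hY : Y =ᵐ[μ] fun ω ↦ gt (W ω, Z ω) + U ω)
    (hshift : μ[U | m] =ᵐ[μ] fun ω ↦ k (Z ω)) :
    μ[Y | m] =ᵐ[μ] fun ω ↦
      (μ[W | m]) ω • (gt (1, Z ω) + k (Z ω)) + (1 - (μ[W | m]) ω) • (gt (0, Z ω) + k (Z ω)) := by
  have h_outcome := condExp_apply_binary (g := fun t ω ↦ gt (t, Z ω)) hm hW hWbin
    (hgt₁.comp_measurable hZ).aestronglyMeasurable
    (hgt₀.comp_measurable hZ).aestronglyMeasurable hgt
  filter_upwards [condExp_congr_ae (m := m) hY, condExp_add hgt hU m, h_outcome, hshift]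
    with ω hYω h_add h_outcomeω h_shiftω
  calc (μ[Y | m]) ω
      = (μ[fun ω ↦ gt (W ω, Z ω) | m]) ω + (μ[U | m]) ω := hYω.trans h_add
    _ = (μ[W | m]) ω • gt (1, Z ω) + (1 - (μ[W | m]) ω) • gt (0, Z ω) + k (Z ω) :=
      congrArg₂ (· + ·) h_outcomeω h_shiftω
    _ = _ := by module

/-- Measure-theoretic content of the paper's Theorem 1: when the structural outcome
function and the confounding shift `μ[U | σ(C)]` factor through the learned representation
`Z = ψ ∘ C`, the counterfactual prediction function can be written as a function of the
treatment and the representation, and the inverse-problem identity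
`μ[Y | σ(S,C)] = (f̃₁ ∘ Z) · μ[W | σ(S,C)] + (f̃₀ ∘ Z) · (1 − μ[W | σ(S,C)])` holds. -/
theorem civ_representation_counterfactual_identity
    {Ω E F : Type*} [MeasurableSpace Ω] [MeasurableSpace E] [MeasurableSpace F]
    {μ : Measure Ω} [IsProbabilityMeasure μ]
    (C : Ω → E) (S W U : Ω → ℝ)
    (hC : Measurable C) (hS : Measurable S) (hW : Measurable W) (hU : Measurable U)
    (hWbin : ∀ ω, W ω = 0 ∨ W ω = 1)
    (hUint : Integrable U μ)
    (ψ : E → F) (hψ : Measurable ψ)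
    (Z : Ω → F) (hZ : Z = ψ ∘ C)
    (gt : ℝ × F → ℝ) (hgt : Measurable gt)
    (hgt1 : Integrable (fun ω => gt (1, Z ω)) μ)
    (hgt0 : Integrable (fun ω => gt (0, Z ω)) μ)
    (Y : Ω → ℝ) (hY : Y = fun ω => gt (W ω, Z ω) + U ω)
    (k : F → ℝ) (hk : Measurable k)
    (hfactor :
      μ[U | MeasurableSpace.comap C inferInstance] =ᵐ[μ] fun ω => k (Z ω))
    (hexcl :
      μ[U | MeasurableSpace.comap (fun ω => (S ω, C ω)) inferInstance]
        =ᵐ[μ] μ[U | MeasurableSpace.comap C inferInstance])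
    (ft₁ ft₀ : F → ℝ)
    (hft₁ : ft₁ = fun z => gt (1, z) + k z)
    (hft₀ : ft₀ = fun z => gt (0, z) + k z) :
    μ[Y | MeasurableSpace.comap (fun ω => (S ω, C ω)) inferInstance]
      =ᵐ[μ] fun ω =>
        ft₁ (Z ω) * (μ[W | MeasurableSpace.comap (fun ω => (S ω, C ω)) inferInstance]) ω
          + ft₀ (Z ω)
            * (1 - (μ[W | MeasurableSpace.comap (fun ω => (S ω, C ω)) inferInstance]) ω) := by
  subst hZ hft₁ hft₀
  have hWbin_ae : ∀ᵐ ω ∂μ, W ω = 0 ∨ W ω = 1 := .of_forall hWbin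
  have hgt_int : Integrable (fun ω ↦ gt (W ω, (ψ ∘ C) ω)) μ :=
    integrable_apply_binary (g := fun t ω ↦ gt (t, (ψ ∘ C) ω)) hW.aestronglyMeasurable hWbin_ae
      hgt1 hgt0
  have hZ_meas : Measurable[.comap (fun ω ↦ (S ω, C ω)) inferInstance] (ψ ∘ C) :=
    (hψ.comp measurable_snd).comp (comap_measurable fun ω ↦ (S ω, C ω))
  have hgt_section (t : ℝ) : StronglyMeasurable fun z ↦ gt (t, z) :=
    (hgt.comp measurable_prodMk_left).stronglyMeasurable
  filter_upwards [civ_representation_counterfactual_identity_general (hS.prodMk hC).comap_le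
    hW.aestronglyMeasurable hWbin_ae hUint hZ_meas (hgt_section 1) (hgt_section 0) hgt_int
    hY.eventuallyEq (hexcl.trans hfactor)] with ω hω
  simpa only [smul_eq_mul, mul_comm] using hω
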